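/- arXiv:2605.30763 — 2 statements merged into one kernel-verified Lean document; each statement's English description precedes it below -/
import Mathlib

section
/- Consider N agents, each with a nonempty compact convex local constraint set U_i ⊆ ℝ^{n_i}, a coupling matrix A_i ∈ ℝ^{p×n_i} and a vector b_i ∈ ℝ^p, and a column-stochastic mixing matrix W = (w_{ij}) ∈ ℝ^{N×N}. Suppose sequences u_τ^i ∈ U_i and d_τ^i ∈ ℝ^p satisfy d_0^i = A_i u_0^i − b_i and d_{τ+1}^i = Σ_{j=1}^N w_{ij} d_τ^j + A_i u_{τ+1}^i − A_i u_τ^i for all i and τ. If for every agent i the tracking variable vanishes, d_τ^i → 0 as τ → ∞, and the primal iterates converge, u_τ^i → u_*^i, then the limit point is feasible for the coupling constraint: Σ_{i=1}^N (A_i u_*^i − b_i) = 0. -/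
/-!
Since the columns of the mixing matrix sum to one, mixing preserves the sum over the agents, so the
tracking variables sum to the total coupling-constraint violation at every iteration. Passing to the
limit, the sum of the tracking variables tends to `0` and, by continuity, the violation tends to its
value at the limit point.
-/

open Matrix Filter Topology

/-- Dynamic average consensus: the local estimates `d τ i` follow the average of the local signals
`r τ i` by mixing with weights `W τ` and adding the increments of the signals. The weights may vary
with time, and their column sums are left to separate hypotheses. -/
structure IsDynamicAverageConsensus {ι R M : Type*} [Fintype ι] [Semiring R] [AddCommGroup M]
    [Module R M] (W : ℕ → Matrix ι ι R) (r d : ℕ → ι → M) : Prop where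
  init : ∀ i, d 0 i = r 0 i
  step : ∀ τ i, d (τ + 1) i = ∑ j, W τ i j • d τ j + (r (τ + 1) i - r τ i)

theorem sum_sum_smul_of_col_sum_eq_one {m n R M : Type*} [Fintype m] [Fintype n] [Semiring R]
    [AddCommMonoid M] [Module R M] {W : Matrix m n R} (hW : ∀ j, ∑ i, W i j = 1) (x : n → M) :
    ∑ i, ∑ j, W i j • x j = ∑ j, x j := by
  rw [Finset.sum_comm]
  simp only [← Finset.sum_smul, hW, one_smul]

namespace IsDynamicAverageConsensus

variable {ι R M : Type*} [Fintype ι] [Semiring R] [AddCommGroup M] [Module R M]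
  {W : ℕ → Matrix ι ι R} {r d : ℕ → ι → M}

theorem sum_eq_sum (h : IsDynamicAverageConsensus W r d) (hW : ∀ τ j, ∑ i, W τ i j = 1) (τ : ℕ) :
    ∑ i, d τ i = ∑ i, r τ i := by
  induction τ with
  | zero => simp only [h.init]
  | succ τ ih =>
    calc ∑ i, d (τ + 1) i
        = ∑ i, ∑ j, W τ i j • d τ j + (∑ i, r (τ + 1) i - ∑ i, r τ i) := by
          simp only [h.step, Finset.sum_add_distrib, Finset.sum_sub_distrib]
      _ = ∑ i, r τ i + (∑ i, r (τ + 1) i - ∑ i, r τ i) := by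
          rw [sum_sum_smul_of_col_sum_eq_one (hW τ), ih]
      _ = ∑ i, r (τ + 1) i := add_sub_cancel _ _

theorem sum_eq_sum_of_tendsto [TopologicalSpace M] [ContinuousAdd M] [T2Space M]
    (h : IsDynamicAverageConsensus W r d) (hW : ∀ τ j, ∑ i, W τ i j = 1) {dlim rlim : ι → M}
    (hd : ∀ i, Tendsto (fun τ => d τ i) atTop (𝓝 (dlim i)))
    (hr : ∀ i, Tendsto (fun τ => r τ i) atTop (𝓝 (rlim i))) :
    ∑ i, dlim i = ∑ i, rlim i := by
  have hd_sum : Tendsto (fun τ => ∑ i, d τ i) atTop (𝓝 (∑ i, dlim i)) :=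
    tendsto_finsetSum _ fun i _ => hd i
  have hr_sum : Tendsto (fun τ => ∑ i, r τ i) atTop (𝓝 (∑ i, rlim i)) :=
    tendsto_finsetSum _ fun i _ => hr i
  exact tendsto_nhds_unique hd_sum (hr_sum.congr fun τ => (h.sum_eq_sum hW τ).symm)

end IsDynamicAverageConsensus

theorem tracking_admm_limit_feasibility_general {ι R M : Type*} [Fintype ι] [Semiring R]
    [AddCommGroup M] [Module R M] [TopologicalSpace M] [ContinuousAdd M] [T2Space M]
    {X : ι → Type*} [∀ i, TopologicalSpace (X i)] {g : (i : ι) → X i → M}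
    {W : ℕ → Matrix ι ι R} (hW : ∀ τ j, ∑ i, W τ i j = 1)
    {u : ℕ → (i : ι) → X i} {d : ℕ → ι → M}
    (hd : IsDynamicAverageConsensus W (fun τ i => g i (u τ i)) d)
    {ustar : (i : ι) → X i} (hg : ∀ i, ContinuousAt (g i) (ustar i))
    (hdlim : ∀ i, Tendsto (fun τ => d τ i) atTop (𝓝 0))
    (hulim : ∀ i, Tendsto (fun τ => u τ i) atTop (𝓝 (ustar i))) :
    ∑ i, g i (ustar i) = 0 :=
  calc ∑ i, g i (ustar i)
      = ∑ _i : ι, 0 :=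
        (hd.sum_eq_sum_of_tendsto hW hdlim fun i => (hg i).tendsto.comp (hulim i)).symm
    _ = 0 := Finset.sum_const_zero

/-- If the Tracking-ADMM tracking variables vanish and the primal iterates
converge, the limit point is feasible for the coupling constraint. -/
theorem tracking_admm_limit_feasibility
    (N p : ℕ) (hN : 0 < N) (n : Fin N → ℕ)
    (U : (i : Fin N) → Set (Fin (n i) → ℝ))
    (hUne : ∀ i, (U i).Nonempty)
    (hUcpt : ∀ i, IsCompact (U i))
    (hUcvx : ∀ i, Convex ℝ (U i))
    (A : (i : Fin N) → Matrix (Fin p) (Fin (n i)) ℝ)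
    (b : Fin N → (Fin p → ℝ))
    (W : Matrix (Fin N) (Fin N) ℝ)
    (hWnonneg : ∀ i j, 0 ≤ W i j)
    (hWcol : ∀ j, ∑ i, W i j = 1)
    (u : ℕ → (i : Fin N) → (Fin (n i) → ℝ))
    (d : ℕ → Fin N → (Fin p → ℝ))
    (hu : ∀ τ i, u τ i ∈ U i)
    (hd0 : ∀ i, d 0 i = (A i) *ᵥ (u 0 i) - b i)
    (hdupd : ∀ τ i,
      d (τ + 1) i =
        (∑ j, W i j • d τ j) + (A i) *ᵥ (u (τ + 1) i) - (A i) *ᵥ (u τ i))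
    (ustar : (i : Fin N) → (Fin (n i) → ℝ))
    (hdlim : ∀ i, Tendsto (fun τ => d τ i) atTop (𝓝 0))
    (hulim : ∀ i, Tendsto (fun τ => u τ i) atTop (𝓝 (ustar i))) :
    ∑ i, ((A i) *ᵥ (ustar i) - b i) = 0 :=
  tracking_admm_limit_feasibility_general (g := fun i v => A i *ᵥ v - b i) (fun _ => hWcol)
    ⟨hd0, fun τ i => by rw [hdupd, sub_sub_sub_cancel_right, add_sub_assoc]⟩
    (fun i => by fun_prop) hdlim hulim
end

section
/- Let σ : ℝ → ℝ be convex and monotone non-decreasing. Consider a K-layer feedforward network on input y ∈ ℝ^n defined by z_1 = σ.(V_0 y + c_0) (σ applied componentwise) and, for k = 1,…,K−1, z_{k+1} = σ.(W_k z_k + V_k y + c_k), where each W_k ∈ ℝ^{m_{k+1}×m_k} has all entries non-negative and the matrices V_k ∈ ℝ^{m_{k+1}×n} and vectors c_k are arbitrary. Then every component of the output z_K is a convex function of the input y ∈ ℝ^n. -/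
open Matrix

/-!
Order vectors componentwise. A non-negative matrix acts as a monotone linear map, and a
non-decreasing convex activation applied to each coordinate is a monotone convex map of vectors.
Monotone convex maps preserve convexity under composition, so by induction every layer is a
convex vector-valued function of the input.
-/

section Convexity

variable {𝕜 E : Type*} [Semiring 𝕜] [PartialOrder 𝕜] [AddCommMonoid E]

-- Unlike `ConvexOn.comp`, this does not ask for `f '' s` to be convex.
theorem convexOn_comp_of_mapsTo {F G : Type*} [SMul 𝕜 E] [AddCommMonoid F] [PartialOrder F]
    [SMul 𝕜 F] [AddCommMonoid G] [PartialOrder G] [SMul 𝕜 G] {s : Set E} {t : Set F}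
    {f : E → F} {g : F → G} (hg : ConvexOn 𝕜 t g) (hg_mono : MonotoneOn g t)
    (hf : ConvexOn 𝕜 s f) (hst : Set.MapsTo f s t) : ConvexOn 𝕜 s (g ∘ f) := by
  refine ⟨hf.1, fun x hx y hy a b ha hb hab => ?_⟩
  calc g (f (a • x + b • y))
      ≤ g (a • f x + b • f y) :=
        hg_mono (hst (hf.1 hx hy ha hb hab)) (hg.1 (hst hx) (hst hy) ha hb hab)
          (hf.2 hx hy ha hb hab)
    _ ≤ a • g (f x) + b • g (f y) := hg.2 (hst hx) (hst hy) ha hb hab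

theorem convexOn_pi_iff {ι : Type*} {F : ι → Type*} [SMul 𝕜 E] [∀ i, AddCommMonoid (F i)]
    [∀ i, PartialOrder (F i)] [∀ i, SMul 𝕜 (F i)] {s : Set E} {f : E → ∀ i, F i}
    (hs : Convex 𝕜 s) : ConvexOn 𝕜 s f ↔ ∀ i, ConvexOn 𝕜 s fun x => f x i :=
  ⟨fun hf i => ⟨hs, fun _ hx _ hy _ _ ha hb hab => hf.2 hx hy ha hb hab i⟩,
    fun hf => ⟨hs, fun _ hx _ hy _ _ ha hb hab i => (hf i).2 hx hy ha hb hab⟩⟩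

theorem convexOn_univ_comp_left {ι F : Type*} [Module 𝕜 E] [AddCommMonoid F] [PartialOrder F]
    [SMul 𝕜 F] {g : E → F} (hg : ConvexOn 𝕜 Set.univ g) :
    ConvexOn 𝕜 Set.univ fun v : ι → E => g ∘ v :=
  (convexOn_pi_iff convex_univ).2 fun i =>
    hg.comp_linearMap (LinearMap.proj (R := 𝕜) (φ := fun _ : ι => E) i)

end Convexity

section MulVec

variable {R m n : Type*} [Fintype n]

theorem monotone_mulVec_of_nonneg [Semiring R] [PartialOrder R] [IsOrderedRing R] {A : Matrix m n R}
    (hA : ∀ i j, 0 ≤ A i j) : Monotone (A *ᵥ ·) :=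
  fun _ _ hvw i => dotProduct_le_dotProduct_of_nonneg_left hvw (hA i)

theorem convexOn_mulVec [CommSemiring R] [PartialOrder R] (A : Matrix m n R) {s : Set (n → R)}
    (hs : Convex R s) : ConvexOn R s (A *ᵥ ·) :=
  A.mulVecLin.convexOn hs

end MulVec

theorem icnn_output_convex_general {𝕜 E : Type*} [CommSemiring 𝕜] [PartialOrder 𝕜]
    [IsOrderedRing 𝕜] [AddCommMonoid E] [SMul 𝕜 E] {s : Set E} {K : ℕ} (hK : 1 ≤ K)
    {ι : ℕ → Type*} [∀ k, Fintype (ι k)]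
    {σ : (k : ℕ) → (ι (k + 1) → 𝕜) → ι (k + 1) → 𝕜}
    (hσ_convex : ∀ k < K, ConvexOn 𝕜 Set.univ (σ k)) (hσ_mono : ∀ k < K, Monotone (σ k))
    {W : (k : ℕ) → Matrix (ι (k + 1)) (ι k) 𝕜}
    (hW : ∀ k, 1 ≤ k → k < K → ∀ i j, 0 ≤ W k i j)
    {u : (k : ℕ) → E → ι (k + 1) → 𝕜} (hu : ∀ k < K, ConvexOn 𝕜 s (u k))
    {z : E → (k : ℕ) → ι k → 𝕜} (hz_one : ∀ y ∈ s, z y 1 = σ 0 (u 0 y))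
    (hz_succ : ∀ y ∈ s, ∀ k, 1 ≤ k → k < K → z y (k + 1) = σ k (W k *ᵥ z y k + u k y)) :
    ConvexOn 𝕜 s fun y => z y K := by
  have activation {k : ℕ} (hk : k < K) {f : E → ι (k + 1) → 𝕜} (hf : ConvexOn 𝕜 s f) :
      ConvexOn 𝕜 s (σ k ∘ f) :=
    convexOn_comp_of_mapsTo (hσ_convex k hk) ((hσ_mono k hk).monotoneOn _) hf
      (Set.mapsTo_univ f s)
  -- Layers beyond `K` are unconstrained, so the induction carries the bound `k ≤ K`.
  suffices layer : ∀ k, 1 ≤ k → k ≤ K → ConvexOn 𝕜 s fun y => z y k from layer K hK le_rfl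
  intro k hk
  induction k, hk using Nat.le_induction with
  | base => exact fun hK => (activation hK (hu 0 hK)).congr fun y hy => (hz_one y hy).symm
  | succ k hk ih =>
    intro hkK
    have hidden : ConvexOn 𝕜 s fun y => W k *ᵥ z y k :=
      convexOn_comp_of_mapsTo (convexOn_mulVec (W k) convex_univ)
        ((monotone_mulVec_of_nonneg (hW k hk hkK)).monotoneOn _) (ih (Nat.le_of_succ_le hkK))
        (Set.mapsTo_univ _ s)
    exact (activation hkK (hidden.add (hu k hkK))).congr fun y hy => (hz_succ y hy k hk hkK).symm

/-- Input-Convex Neural Network: with a convex, non-decreasing activation and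
non-negative hidden-to-hidden weights, every component of the K-th layer is a
convex function of the input. -/
theorem icnn_output_convex
    (n K : ℕ) (hK : 1 ≤ K)
    (σ : ℝ → ℝ)
    (hσcvx : ConvexOn ℝ Set.univ σ)
    (hσmono : Monotone σ)
    (m : ℕ → ℕ)
    (W : (k : ℕ) → Matrix (Fin (m (k + 1))) (Fin (m k)) ℝ)
    (V : (k : ℕ) → Matrix (Fin (m (k + 1))) (Fin n) ℝ)
    (c : (k : ℕ) → Fin (m (k + 1)) → ℝ)
    (hW : ∀ k, 1 ≤ k → k < K → ∀ r s, 0 ≤ W k r s)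
    (z : (Fin n → ℝ) → (k : ℕ) → (Fin (m k) → ℝ))
    (hz1 : ∀ y, z y 1 = fun r => σ (((V 0) *ᵥ y) r + c 0 r))
    (hzrec : ∀ y k, 1 ≤ k → k < K →
      z y (k + 1) = fun r => σ (((W k) *ᵥ (z y k)) r + ((V k) *ᵥ y) r + c k r)) :
    ∀ r : Fin (m K), ConvexOn ℝ Set.univ (fun y : Fin n → ℝ => z y K r) := by
  have skip (k : ℕ) : ConvexOn ℝ Set.univ fun y => V k *ᵥ y + c k :=
    (convexOn_mulVec (V k) convex_univ).add_const (c k)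
  simp only [add_assoc] at hzrec
  exact (convexOn_pi_iff convex_univ).1 <| icnn_output_convex_general (ι := fun k => Fin (m k)) hK
    (fun _ _ => convexOn_univ_comp_left hσcvx) (fun _ _ _ _ hvw r => hσmono (hvw r)) hW
    (fun k _ => skip k) (fun y _ => hz1 y) (fun y _ => hzrec y)
end
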